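/- Let p ∈ (0,1) and let Φ be the cumulative distribution function of the standard Gaussian. Let α ∈ ℝ^d have entries in [0,1] with at least one entry equal to 1, let X₁, X₂ be i.i.d. N(0,D_α), and let t_{p,α} satisfy P(⟨X₁,X₂⟩ ≥ t_{p,α}) = p. Then: (i) with t_p = Φ^{−1}(p), one has ‖α‖₂·t_p − k_p ≤ t_{p,α} ≤ ‖α‖₂·t_p + k_p for a constant k_p depending only on p; and (ii) with p' := Φ^{−1}(t_{p,α}/‖α‖₂), one has |p − p'| ≤ 3·(‖α‖₃/‖α‖₂)³. -/

import Mathlib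

open MeasureTheory ProbabilityTheory Real Filter
open scoped Classical ENNReal NNReal

noncomputable section

/-- Euclidean inner product on `Fin d → ℝ`. -/
def dotp {d : ℕ} (x y : Fin d → ℝ) : ℝ := ∑ i, x i * y i

/-- The `q`-norm of a vector `α ∈ ℝ^d`. -/
def nrm {d : ℕ} (q : ℕ) (α : Fin d → ℝ) : ℝ := (∑ i, α i ^ q) ^ ((1 : ℝ) / q)

/-- The centered Gaussian measure `N(0, D_α)` on `ℝ^d`, `D_α = diag α`. -/
def gaussPi (d : ℕ) (α : Fin d → ℝ) : Measure (Fin d → ℝ) :=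
  Measure.pi fun i => gaussianReal 0 (Real.toNNReal (α i))

/-- The law of `n` i.i.d. samples from `N(0, D_α)`. -/
def sampleMeasure (n d : ℕ) (α : Fin d → ℝ) : Measure (Fin n → Fin d → ℝ) :=
  Measure.pi fun _ => gaussPi d α

/-- `t` is the `p`-th upper quantile of `⟨X₁, X₂⟩` for `X₁, X₂` i.i.d. `N(0, D_α)`. -/
def IsThreshold (d : ℕ) (α : Fin d → ℝ) (p t : ℝ) : Prop :=
  ((gaussPi d α).prod (gaussPi d α)) {xy | t ≤ dotp xy.1 xy.2} = ENNReal.ofReal p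

instance (n : ℕ) : MeasurableSpace (SimpleGraph (Fin n)) := ⊤

/-- The anisotropic random geometric graph `G(n, p, α)`, with threshold `t = t_{p,α}`. -/
def geomGraph (n d : ℕ) (α : Fin d → ℝ) (t : ℝ) : Measure (SimpleGraph (Fin n)) :=
  Measure.map (fun X => SimpleGraph.fromRel fun i j => t ≤ dotp (X i) (X j))
    (sampleMeasure n d α)

/-- The Erdős–Rényi random graph `G(n, p)`. -/
def erGraph (n : ℕ) (p : ℝ) : Measure (SimpleGraph (Fin n)) :=
  Measure.map (fun x => SimpleGraph.fromRel fun i j => x s(i, j) ≤ p)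
    (Measure.pi fun _ : Sym2 (Fin n) => volume.restrict (Set.Icc (0 : ℝ) 1))

/-- Total variation distance between two measures. -/
def tvDist {Ω : Type*} [MeasurableSpace Ω] (μ ν : Measure Ω) : ℝ :=
  ⨆ s : {s : Set Ω // MeasurableSet s}, |(μ s.1).toReal - (ν s.1).toReal|

/-!
Given `X₁ = x`, the inner product `⟨X₁, X₂⟩` is a centered Gaussian of variance `S = ∑ αᵢ xᵢ²`, so
`P(⟨X₁, X₂⟩ ≥ t)` is the mean over `x` of the Gaussian tail `T(S, t)`. Expand `v ↦ T(v, t)` to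
second order around `E S = ‖α‖₂²`: the first-order term has mean zero, and `Var S = 2 ‖α‖₄⁴`,
which gives `|p - p'| ≤ 3 (‖α‖₄ / ‖α‖₂)⁴ ≤ 3 (‖α‖₃ / ‖α‖₂)³`. By Chebyshev's inequality,
`t / ‖α‖₂` stays in an interval depending only on `p`. There the Gaussian density is bounded below,
so the estimate on probabilities becomes one on thresholds.
-/

section TaylorBound

variable {E : Type*} [NormedAddCommGroup E] [NormedSpace ℝ E]

lemma norm_image_sub_sub_smul_le_of_norm_hasDerivWithin_le {f f' f'' : ℝ → E} {s : Set ℝ} {C : ℝ}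
    (hs : Convex ℝ s) (hf : ∀ x ∈ s, HasDerivWithinAt f (f' x) s x)
    (hf' : ∀ x ∈ s, HasDerivWithinAt f' (f'' x) s x) (hC : ∀ x ∈ s, ‖f'' x‖ ≤ C)
    {x y : ℝ} (hx : x ∈ s) (hy : y ∈ s) :
    ‖f y - f x - (y - x) • f' x‖ ≤ C * (y - x) ^ 2 := by
  have hsub : Set.uIcc x y ⊆ s := hs.ordConnected.uIcc_subset hx hy
  have hC0 : 0 ≤ C := (norm_nonneg _).trans (hC x hx)
  have hderiv : ∀ z ∈ Set.uIcc x y,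
      HasDerivWithinAt (fun z ↦ f z - (z - x) • f' x) (f' z - f' x) (Set.uIcc x y) z := by
    intro z hz
    simpa using ((hf z (hsub hz)).mono hsub).fun_sub
      (((hasDerivWithinAt_id z _).sub_const x).smul_const (f' x))
  have hbound : ∀ z ∈ Set.uIcc x y, ‖f' z - f' x‖ ≤ C * |y - x| := fun z hz ↦
    (hs.norm_image_sub_le_of_norm_hasDerivWithin_le hf' hC hx (hsub hz)).trans
      (mul_le_mul_of_nonneg_left (Set.abs_sub_left_of_mem_uIcc hz) hC0)
  have h := (convex_uIcc x y).norm_image_sub_le_of_norm_hasDerivWithin_le hderiv hbound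
    Set.left_mem_uIcc Set.right_mem_uIcc
  calc ‖f y - f x - (y - x) • f' x‖ ≤ C * |y - x| * |y - x| := by
        simpa [sub_right_comm] using h
    _ = C * (y - x) ^ 2 := by rw [mul_assoc, abs_mul_abs_self, sq]

end TaylorBound

section NegInvariant

lemma measureReal_le_half_of_disjoint_neg {G : Type*} [MeasurableSpace G] [InvolutiveNeg G]
    [MeasurableNeg G] {μ : Measure G} [IsProbabilityMeasure μ] [μ.IsNegInvariant] {s : Set G}
    (hs : MeasurableSet s) (h : Disjoint s (-s)) : μ.real s ≤ 1 / 2 := by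
  have hunion : μ.real (s ∪ -s) = μ.real s + μ.real s := by
    rw [measureReal_union h hs.neg, Measure.real, Measure.real, Measure.measure_neg]
  linarith [measureReal_le_one (μ := μ) (s := s ∪ -s)]

instance (v : ℝ≥0) : (gaussianReal 0 v).IsNegInvariant :=
  ⟨gaussianReal_map_neg.trans (by rw [neg_zero])⟩

end NegInvariant

section GaussianDensity

lemma gaussianPDFReal_zero_one (x : ℝ) :
    gaussianPDFReal 0 1 x = (√(2 * π))⁻¹ * rexp (-x ^ 2 / 2) := by
  simp [gaussianPDFReal]

lemma hasDerivAt_gaussianPDFReal (μ : ℝ) (v : ℝ≥0) (x : ℝ) :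
    HasDerivAt (gaussianPDFReal μ v) (-((x - μ) / v) * gaussianPDFReal μ v x) x := by
  have h := (((((hasDerivAt_id x).sub_const μ).pow 2).neg.div_const
    (2 * (v : ℝ))).exp).const_mul (√(2 * π * v))⁻¹
  refine h.congr_deriv ?_
  simp only [gaussianPDFReal, id, Pi.pow_apply, Pi.neg_apply]
  push_cast
  ring

lemma continuous_gaussianPDFReal (μ : ℝ) (v : ℝ≥0) : Continuous (gaussianPDFReal μ v) :=
  continuous_iff_continuousAt.2 fun x ↦ (hasDerivAt_gaussianPDFReal μ v x).continuousAt

lemma gaussianPDFReal_le_of_abs_sub_le {μ x y : ℝ} (v : ℝ≥0) (h : |x - μ| ≤ |y - μ|) :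
    gaussianPDFReal μ v y ≤ gaussianPDFReal μ v x := by
  have h2 : (x - μ) ^ 2 ≤ (y - μ) ^ 2 := sq_le_sq.2 h
  unfold gaussianPDFReal
  gcongr

lemma abs_mul_gaussianPDFReal_le {a x C : ℝ} (hC : 0 ≤ C) (h : a ^ 2 ≤ 6 * C ^ 2 * rexp (x ^ 2)) :
    |a * gaussianPDFReal 0 1 x| ≤ C := by
  refine abs_le_of_sq_le_sq ?_ hC
  have hexp : rexp (-x ^ 2 / 2) ^ 2 * rexp (x ^ 2) = 1 := by
    rw [← Real.exp_nat_mul, ← Real.exp_add, ← Real.exp_zero]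
    push_cast
    ring_nf
  calc (a * gaussianPDFReal 0 1 x) ^ 2 = a ^ 2 * rexp (-x ^ 2 / 2) ^ 2 * (2 * π)⁻¹ := by
        rw [gaussianPDFReal_zero_one, mul_pow, mul_pow, inv_pow, Real.sq_sqrt (by positivity)]
        ring
    _ ≤ 6 * C ^ 2 * rexp (x ^ 2) * rexp (-x ^ 2 / 2) ^ 2 * 6⁻¹ := by
        gcongr
        linarith [Real.pi_gt_three]
    _ = C ^ 2 * (rexp (-x ^ 2 / 2) ^ 2 * rexp (x ^ 2)) := by ring
    _ = C ^ 2 := by rw [hexp, mul_one]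

lemma abs_self_mul_gaussianPDFReal_le (x : ℝ) : |x * gaussianPDFReal 0 1 x| ≤ 1 / 3 := by
  refine abs_mul_gaussianPDFReal_le (by norm_num) ?_
  have hexp := Real.quadratic_le_exp_of_nonneg (sq_nonneg x)
  have hpoly : x ^ 2 ≤ 2 / 3 * (1 + x ^ 2 + (x ^ 2) ^ 2 / 2) := by
    nlinarith [sq_nonneg (x ^ 2 - 1)]
  linarith

lemma abs_cube_sub_three_mul_gaussianPDFReal_le (x : ℝ) :
    |(x ^ 3 - 3 * x) * gaussianPDFReal 0 1 x| ≤ 2 / 3 := by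
  refine abs_mul_gaussianPDFReal_le (by norm_num) ?_
  have hexp : 1 + x ^ 2 + (x ^ 2) ^ 2 / 2 + (x ^ 2) ^ 3 / 6 + (x ^ 2) ^ 4 / 24 ≤ rexp (x ^ 2) := by
    simpa [Finset.sum_range_succ, Nat.factorial] using Real.sum_le_exp_of_nonneg (sq_nonneg x) 5
  have hpoly : (x ^ 3 - 3 * x) ^ 2
      ≤ 8 / 3 * (1 + x ^ 2 + (x ^ 2) ^ 2 / 2 + (x ^ 2) ^ 3 / 6 + (x ^ 2) ^ 4 / 24) := by
    nlinarith [sq_nonneg (2 * x ^ 2 - 5), sq_nonneg (x * (2 * x ^ 2 - 5)),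
      mul_nonneg (sq_nonneg (x ^ 2)) (sq_nonneg (2 * x ^ 2 - 5)), sq_nonneg (2 * x ^ 2 - 1)]
  linarith

end GaussianDensity

section GaussianMoments

lemma integrable_pow_mul_gaussianPDFReal (n : ℕ) (μ : ℝ) (v : ℝ≥0) :
    Integrable fun x ↦ x ^ n * gaussianPDFReal μ v x := by
  rcases eq_or_ne v 0 with rfl | hv
  · simp
  have h : Integrable (fun x ↦ ‖x‖ ^ n) (gaussianReal μ v) :=
    (memLp_id_gaussianReal n).integrable_norm_pow'
  rw [gaussianReal_of_var_ne_zero _ hv, integrable_withDensity_iff (measurable_gaussianPDF _ _)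
    (ae_of_all _ fun _ ↦ gaussianPDF_lt_top)] at h
  refine h.mono' (by fun_prop) (ae_of_all _ fun x ↦ ?_)
  simp [toReal_gaussianPDF, abs_of_nonneg (gaussianPDFReal_nonneg μ v x)]

lemma integral_pow_add_two_gaussianReal (n : ℕ) (v : ℝ≥0) :
    ∫ x, x ^ (n + 2) ∂gaussianReal 0 v = (n + 1) * v * ∫ x, x ^ n ∂gaussianReal 0 v := by
  rcases eq_or_ne v 0 with rfl | hv
  · simp
  have hv' : (v : ℝ) ≠ 0 := by exact_mod_cast hv
  have hint (m : ℕ) := integrable_pow_mul_gaussianPDFReal m 0 v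
  have hderiv (x : ℝ) : HasDerivAt (fun x ↦ v * gaussianPDFReal 0 v x)
      (-(x * gaussianPDFReal 0 v x)) x :=
    ((hasDerivAt_gaussianPDFReal 0 v x).const_mul (v : ℝ)).congr_deriv (by field_simp; ring)
  have hparts := integral_mul_deriv_eq_deriv_mul_of_integrable
    (u := fun x ↦ x ^ (n + 1)) (u' := fun x ↦ ((n + 1 : ℕ) : ℝ) * x ^ n)
    (fun x _ ↦ hasDerivAt_pow (n + 1) x) (fun x _ ↦ hderiv x)
    ((hint (n + 2)).neg.congr <| ae_of_all _ fun x ↦ by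
      simp only [Pi.mul_apply, Pi.neg_apply]; ring)
    (((hint n).const_mul ((n + 1 : ℕ) * v)).congr <| ae_of_all _ fun x ↦ by
      simp only [Pi.mul_apply]; ring)
    (((hint (n + 1)).const_mul v).congr <| ae_of_all _ fun x ↦ by
      simp only [Pi.mul_apply]; ring)
  simp only [mul_neg, integral_neg, neg_inj] at hparts
  calc ∫ x, x ^ (n + 2) ∂gaussianReal 0 v
      = ∫ x, x ^ (n + 1) * (x * gaussianPDFReal 0 v x) := by
        rw [integral_gaussianReal_eq_integral_smul hv]
        congr with x
        rw [smul_eq_mul]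
        ring
    _ = (n + 1) * v * ∫ x, x ^ n ∂gaussianReal 0 v := by
        rw [hparts, integral_gaussianReal_eq_integral_smul hv, ← integral_const_mul]
        congr with x
        rw [smul_eq_mul]
        push_cast
        ring

lemma integral_sq_gaussianReal (v : ℝ≥0) : ∫ x, x ^ 2 ∂gaussianReal 0 v = v := by
  simpa using integral_pow_add_two_gaussianReal 0 v

lemma integral_pow_four_gaussianReal (v : ℝ≥0) :
    ∫ x, x ^ 4 ∂gaussianReal 0 v = 3 * (v : ℝ) ^ 2 := by
  rw [integral_pow_add_two_gaussianReal 2, integral_sq_gaussianReal]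
  push_cast
  ring

end GaussianMoments

section GaussianTail

/-- The upper tail `P(Z ≥ t)` of a centered Gaussian `Z`, as a function of the variance `v` of `Z`,
which may be `0`. -/
def gaussianTail (v : ℝ≥0) (t : ℝ) : ℝ := (gaussianReal 0 v).real (Set.Ici t)

variable {v : ℝ≥0} {t : ℝ}

lemma gaussianTail_nonneg (v : ℝ≥0) (t : ℝ) : 0 ≤ gaussianTail v t := measureReal_nonneg

lemma gaussianTail_le_one (v : ℝ≥0) (t : ℝ) : gaussianTail v t ≤ 1 := measureReal_le_one

lemma one_sub_gaussianTail (v : ℝ≥0) (t : ℝ) :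
    1 - gaussianTail v t = (gaussianReal 0 v).real (Set.Iio t) := by
  rw [gaussianTail, ← probReal_compl_eq_one_sub measurableSet_Ici, Set.compl_Ici]

lemma gaussianReal_real_Ioi (hv : v ≠ 0) (t : ℝ) :
    (gaussianReal 0 v).real (Set.Ioi t) = gaussianTail v t := by
  have := nullSingletonClass_gaussianReal (μ := 0) hv
  exact measureReal_congr Ioi_ae_eq_Ici

lemma gaussianTail_zero_left (t : ℝ) : gaussianTail 0 t = if t ≤ 0 then 1 else 0 := by
  simp [gaussianTail, measureReal_def, Set.indicator_apply, apply_ite ENNReal.toReal]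

lemma gaussianTail_eq_gaussianTail_one (hv : v ≠ 0) (t : ℝ) :
    gaussianTail v t = gaussianTail 1 (t / √v) := by
  have hs : 0 < √(v : ℝ) := Real.sqrt_pos.2 (by positivity)
  have hmap : (gaussianReal 0 v).map (· / √(v : ℝ)) = gaussianReal 0 1 := by
    rw [gaussianReal_map_div_const, zero_div]
    congr 1
    ext
    simp [hv]
  rw [gaussianTail, gaussianTail, ← hmap, map_measureReal_apply (by fun_prop) measurableSet_Ici]
  congr 1
  ext x
  simp [div_le_div_iff_of_pos_right hs]

lemma measurable_gaussianTail_left (t : ℝ) : Measurable fun v ↦ gaussianTail v t :=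
  ((Measure.measurable_coe measurableSet_Ici).comp
    (measurable_gaussianReal.comp measurable_prodMk_left)).ennreal_toReal

lemma gaussianTail_sub (hv : v ≠ 0) (a b : ℝ) :
    gaussianTail v a - gaussianTail v b = ∫ x in a..b, gaussianPDFReal 0 v x := by
  have htail (t : ℝ) : gaussianTail v t = ∫ x in Set.Ici t, gaussianPDFReal 0 v x := by
    rw [gaussianTail, Measure.real, gaussianReal_apply_eq_integral _ hv, ENNReal.toReal_ofReal]
    exact integral_nonneg fun x ↦ gaussianPDFReal_nonneg _ _ _
  rw [htail, htail]
  exact intervalIntegral.integral_Ici_sub_Ici' (integrable_gaussianPDFReal 0 v).integrableOn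
    (integrable_gaussianPDFReal 0 v).integrableOn

lemma hasDerivAt_gaussianTail (hv : v ≠ 0) (t : ℝ) :
    HasDerivAt (gaussianTail v) (-gaussianPDFReal 0 v t) t := by
  have hcont := continuous_gaussianPDFReal 0 v
  have h := (intervalIntegral.integral_hasDerivAt_right (hcont.intervalIntegrable 0 t)
    (hcont.stronglyMeasurableAtFilter _ _) hcont.continuousAt).const_sub (gaussianTail v 0)
  refine h.congr_of_eventuallyEq (Eventually.of_forall fun s ↦ ?_)
  simp [← gaussianTail_sub hv]

lemma gaussianPDFReal_mul_abs_sub_le_abs_gaussianTail_sub {M a b : ℝ} (hv : v ≠ 0)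
    (ha : |a| ≤ M) (hb : |b| ≤ M) :
    gaussianPDFReal 0 v M * |a - b| ≤ |gaussianTail v a - gaussianTail v b| := by
  wlog hab : a ≤ b generalizing a b
  · rw [abs_sub_comm a, abs_sub_comm (gaussianTail v a)]
    exact this hb ha (le_of_not_ge hab)
  have hcont := continuous_gaussianPDFReal 0 v
  have hpdf : ∀ x ∈ Set.Icc a b, gaussianPDFReal 0 v M ≤ gaussianPDFReal 0 v x := by
    refine fun x hx ↦ gaussianPDFReal_le_of_abs_sub_le v ?_
    simpa using (abs_le.2 ⟨(abs_le.1 ha).1.trans hx.1, hx.2.trans (abs_le.1 hb).2⟩).trans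
      (le_abs_self M)
  calc gaussianPDFReal 0 v M * |a - b| = ∫ _ in a..b, gaussianPDFReal 0 v M := by
        rw [abs_sub_comm, abs_of_nonneg (sub_nonneg.2 hab), intervalIntegral.integral_const,
          smul_eq_mul, mul_comm]
    _ ≤ ∫ x in a..b, gaussianPDFReal 0 v x :=
        intervalIntegral.integral_mono_on hab (by simp) (hcont.intervalIntegrable _ _) hpdf
    _ ≤ |gaussianTail v a - gaussianTail v b| := by
        rw [← gaussianTail_sub hv]
        exact le_abs_self _

lemma gaussianTail_le_half (v : ℝ≥0) (ht : 0 < t) : gaussianTail v t ≤ 1 / 2 := by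
  refine measureReal_le_half_of_disjoint_neg measurableSet_Ici ?_
  rw [Set.neg_Ici]
  exact (Set.Iic_disjoint_Ici.2 (by linarith)).symm

lemma one_sub_gaussianTail_le_half (v : ℝ≥0) (ht : t ≤ 0) : 1 - gaussianTail v t ≤ 1 / 2 := by
  rw [one_sub_gaussianTail]
  refine measureReal_le_half_of_disjoint_neg measurableSet_Iio ?_
  rw [Set.neg_Iio]
  exact Set.Iio_disjoint_Ioi_of_not_lt (by linarith)

lemma abs_gaussianTail_sub_le_half (v w : ℝ≥0) (t : ℝ) :
    |gaussianTail v t - gaussianTail w t| ≤ 1 / 2 := by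
  have h (u : ℝ≥0) : 0 ≤ gaussianTail u t ∧ gaussianTail u t ≤ 1 :=
    ⟨gaussianTail_nonneg u t, gaussianTail_le_one u t⟩
  rw [abs_le]
  rcases lt_or_ge 0 t with ht | ht
  · constructor <;> linarith [h v, h w, gaussianTail_le_half v ht, gaussianTail_le_half w ht]
  · constructor <;>
      linarith [h v, h w, one_sub_gaussianTail_le_half v ht, one_sub_gaussianTail_le_half w ht]

lemma sq_mul_gaussianReal_real_le (v : ℝ≥0) {s : Set ℝ} (hs : ∀ x ∈ s, |t| ≤ |x|) :
    t ^ 2 * (gaussianReal 0 v).real s ≤ v := by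
  calc t ^ 2 * (gaussianReal 0 v).real s
      ≤ t ^ 2 * (gaussianReal 0 v).real {x | t ^ 2 ≤ x ^ 2} :=
        mul_le_mul_of_nonneg_left (measureReal_mono fun x hx ↦ sq_le_sq.2 (hs x hx)) (sq_nonneg t)
    _ ≤ ∫ x, x ^ 2 ∂gaussianReal 0 v :=
        mul_meas_ge_le_integral_of_nonneg (ae_of_all _ fun x ↦ sq_nonneg x)
          (memLp_id_gaussianReal 2).integrable_sq (t ^ 2)
    _ = v := integral_sq_gaussianReal v

lemma sq_mul_gaussianTail_le (v : ℝ≥0) (ht : 0 ≤ t) : t ^ 2 * gaussianTail v t ≤ v :=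
  sq_mul_gaussianReal_real_le v fun _ hx ↦ abs_le_abs_of_nonneg ht hx

lemma sq_mul_one_sub_gaussianTail_le (v : ℝ≥0) (ht : t ≤ 0) :
    t ^ 2 * (1 - gaussianTail v t) ≤ v := by
  rw [one_sub_gaussianTail]
  exact sq_mul_gaussianReal_real_le v fun _ hx ↦ abs_le_abs_of_nonpos ht hx.le

end GaussianTail

section VarianceExpansion

/-- The derivative in `v` of the tail `gaussianTail v t`: with `u = t / √v` it is `u φ(u) / (2 v)`,
where `φ` is the standard Gaussian density. -/
def gaussianTailVarDeriv (v t : ℝ) : ℝ := t / √v * gaussianPDFReal 0 1 (t / √v) / (2 * v)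

lemma hasDerivAt_div_sqrt (t : ℝ) {v : ℝ} (hv : 0 < v) :
    HasDerivAt (fun w ↦ t / √w) (-(t / √v / (2 * v))) v := by
  have hs : 0 < √v := Real.sqrt_pos.2 hv
  refine (((Real.hasDerivAt_sqrt hv.ne').inv hs.ne').const_mul t).congr_deriv ?_
  rw [Real.sq_sqrt hv.le]
  field_simp

lemma hasDerivAt_gaussianTail_one_div_sqrt (t : ℝ) {v : ℝ} (hv : 0 < v) :
    HasDerivAt (fun w ↦ gaussianTail 1 (t / √w)) (gaussianTailVarDeriv v t) v := by
  refine ((hasDerivAt_gaussianTail one_ne_zero _).comp v (hasDerivAt_div_sqrt t hv)).congr_deriv ?_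
  rw [gaussianTailVarDeriv]
  ring

lemma hasDerivAt_gaussianTailVarDeriv (t : ℝ) {v : ℝ} (hv : 0 < v) :
    HasDerivAt (gaussianTailVarDeriv · t)
      (((t / √v) ^ 3 - 3 * (t / √v)) * gaussianPDFReal 0 1 (t / √v) / (4 * v ^ 2)) v := by
  have h := ((hasDerivAt_div_sqrt t hv).mul
    ((hasDerivAt_gaussianPDFReal 0 1 _).comp v (hasDerivAt_div_sqrt t hv))).div
      ((hasDerivAt_id v).const_mul 2) (by simpa using hv.ne')
  refine h.congr_deriv ?_
  simp only [Pi.mul_apply, Function.comp, id, sub_zero, NNReal.coe_one, div_one, mul_one]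
  generalize t / √v = u
  generalize gaussianPDFReal 0 1 u = f
  field_simp
  ring

lemma abs_gaussianTailVarDeriv_le (t : ℝ) {v : ℝ} (hv : 0 < v) :
    |gaussianTailVarDeriv v t| ≤ 1 / (6 * v) := by
  rw [gaussianTailVarDeriv, abs_div, abs_of_pos (by positivity : 0 < 2 * v)]
  calc _ ≤ 1 / 3 / (2 * v) := by
        gcongr
        exact abs_self_mul_gaussianPDFReal_le _
    _ = 1 / (6 * v) := by
        field_simp
        norm_num

lemma abs_gaussianTail_one_div_sqrt_sub_le (t : ℝ) {v v₀ : ℝ} (hv₀ : 0 < v₀) (hv : v₀ / 3 ≤ v) :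
    |gaussianTail 1 (t / √v) - gaussianTail 1 (t / √v₀) - (v - v₀) * gaussianTailVarDeriv v₀ t|
      ≤ 3 / (2 * v₀ ^ 2) * (v - v₀) ^ 2 := by
  have hpos : ∀ w ∈ Set.Ici (v₀ / 3), 0 < w := fun w hw ↦ lt_of_lt_of_le (by positivity) hw
  refine norm_image_sub_sub_smul_le_of_norm_hasDerivWithin_le (convex_Ici (v₀ / 3))
    (fun w hw ↦ (hasDerivAt_gaussianTail_one_div_sqrt t (hpos w hw)).hasDerivWithinAt)
    (fun w hw ↦ (hasDerivAt_gaussianTailVarDeriv t (hpos w hw)).hasDerivWithinAt)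
    (fun w hw ↦ ?_) (Set.mem_Ici.2 (by linarith)) hv
  have hw0 := hpos w hw
  rw [Real.norm_eq_abs, abs_div, abs_of_pos (by positivity : 0 < 4 * w ^ 2)]
  calc _ ≤ 2 / 3 / (4 * (v₀ / 3) ^ 2) := by
        gcongr
        · exact abs_cube_sub_three_mul_gaussianPDFReal_le _
        · exact hw
    _ = 3 / (2 * v₀ ^ 2) := by
        field_simp
        norm_num

/- Near `v = 0` the second derivative in `v` is not bounded, but there the deviation `v₀ - v` is of
order `v₀`, and the a priori bound `1 / 2` on the difference of the tails is enough. -/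
lemma abs_gaussianTail_sub_sub_le (t : ℝ) (v : ℝ≥0) {v₀ : ℝ≥0} (hv₀ : v₀ ≠ 0) :
    |gaussianTail v t - gaussianTail v₀ t - (v - v₀) * gaussianTailVarDeriv v₀ t|
      ≤ 3 / (2 * (v₀ : ℝ) ^ 2) * (v - v₀) ^ 2 := by
  have hpos : 0 < (v₀ : ℝ) := by positivity
  rcases le_or_gt ((v₀ : ℝ) / 3) v with hv | hv
  · have hvpos : 0 < (v : ℝ) := lt_of_lt_of_le (by positivity) hv
    rw [gaussianTail_eq_gaussianTail_one hv₀,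
      gaussianTail_eq_gaussianTail_one (by exact_mod_cast hvpos.ne')]
    exact abs_gaussianTail_one_div_sqrt_sub_le t hpos hv
  have hfirst : |((v : ℝ) - v₀) * gaussianTailVarDeriv v₀ t| ≤ 1 / 6 := by
    have hdist : |(v : ℝ) - v₀| ≤ v₀ := abs_le.2 ⟨by linarith [v.coe_nonneg], by linarith⟩
    calc _ = |(v : ℝ) - v₀| * |gaussianTailVarDeriv v₀ t| := abs_mul _ _
      _ ≤ v₀ * (1 / (6 * v₀)) := by
          gcongr
          exact abs_gaussianTailVarDeriv_le t hpos
      _ = 1 / 6 := by field_simp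
  have hsecond : 2 / 3 ≤ 3 / (2 * (v₀ : ℝ) ^ 2) * (v - v₀) ^ 2 := by
    rw [div_mul_eq_mul_div, div_le_div_iff₀ (by norm_num) (by positivity)]
    nlinarith [mul_self_le_mul_self (by positivity : 0 ≤ 2 / 3 * (v₀ : ℝ)) (by linarith :
      2 / 3 * (v₀ : ℝ) ≤ v₀ - v)]
  linarith [abs_sub (gaussianTail v t - gaussianTail v₀ t)
    (((v : ℝ) - v₀) * gaussianTailVarDeriv v₀ t), abs_gaussianTail_sub_le_half v v₀ t]

end VarianceExpansion

section VarianceMixture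

variable {Ω : Type*} {mΩ : MeasurableSpace Ω} {P : Measure Ω} [IsProbabilityMeasure P] {S : Ω → ℝ≥0}

lemma integrable_gaussianTail (hS : AEMeasurable S P) (t : ℝ) :
    Integrable (fun ω ↦ gaussianTail (S ω) t) P :=
  .of_bound ((measurable_gaussianTail_left t).comp_aemeasurable hS).aestronglyMeasurable 1 <|
    ae_of_all _ fun ω ↦ by
      rw [Real.norm_of_nonneg (gaussianTail_nonneg _ _)]
      exact gaussianTail_le_one _ _

lemma abs_integral_gaussianTail_sub_le (hS : MemLp (fun ω ↦ (S ω : ℝ)) 2 P) {v : ℝ≥0} (hv : v ≠ 0)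
    (hmean : ∫ ω, (S ω : ℝ) ∂P = v) (t : ℝ) :
    |∫ ω, gaussianTail (S ω) t ∂P - gaussianTail v t|
      ≤ 3 / (2 * (v : ℝ) ^ 2) * Var[fun ω ↦ (S ω : ℝ); P] := by
  have hSm := hS.aestronglyMeasurable.aemeasurable
  have htail := integrable_gaussianTail (aemeasurable_coe_nnreal_real_iff.1 hSm) t
  have hdiff : Integrable (fun ω ↦ gaussianTail (S ω) t - gaussianTail v t) P :=
    htail.sub (integrable_const _)
  have hSi := hS.integrable one_le_two
  have hdev : Integrable (fun ω ↦ ((S ω : ℝ) - v) * gaussianTailVarDeriv v t) P :=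
    (hSi.sub (integrable_const _)).mul_const _
  have hsq : Integrable (fun ω ↦ ((S ω : ℝ) - v) ^ 2) P := (hS.sub (memLp_const _)).integrable_sq
  have hcenter : ∫ ω, ((S ω : ℝ) - v) * gaussianTailVarDeriv v t ∂P = 0 := by
    rw [integral_mul_const, integral_sub hSi (integrable_const _), hmean]
    simp
  calc |∫ ω, gaussianTail (S ω) t ∂P - gaussianTail v t|
      = |∫ ω, (gaussianTail (S ω) t - gaussianTail v t
          - (S ω - v) * gaussianTailVarDeriv v t) ∂P| := by
        rw [integral_sub hdiff hdev, hcenter, integral_sub htail (integrable_const _)]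
        simp
    _ ≤ ∫ ω, 3 / (2 * (v : ℝ) ^ 2) * (S ω - v) ^ 2 ∂P := by
        rw [← Real.norm_eq_abs]
        exact norm_integral_le_of_norm_le (hsq.const_mul _) <| ae_of_all _ fun ω ↦
          abs_gaussianTail_sub_sub_le t (S ω) hv
    _ = 3 / (2 * (v : ℝ) ^ 2) * Var[fun ω ↦ (S ω : ℝ); P] := by
        rw [integral_const_mul, variance_eq_integral hSm, hmean]

lemma min_integral_gaussianTail_mul_sq_le (hS : Integrable (fun ω ↦ (S ω : ℝ)) P) (t : ℝ) :
    min (∫ ω, gaussianTail (S ω) t ∂P) (1 - ∫ ω, gaussianTail (S ω) t ∂P) * t ^ 2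
      ≤ ∫ ω, (S ω : ℝ) ∂P := by
  have htail := integrable_gaussianTail
    (aemeasurable_coe_nnreal_real_iff.1 hS.aestronglyMeasurable.aemeasurable) t
  rcases le_total 0 t with ht | ht
  · calc _ ≤ (∫ ω, gaussianTail (S ω) t ∂P) * t ^ 2 := by
          gcongr
          exact min_le_left _ _
      _ = ∫ ω, t ^ 2 * gaussianTail (S ω) t ∂P := by rw [integral_const_mul, mul_comm]
      _ ≤ ∫ ω, (S ω : ℝ) ∂P :=
          integral_mono (htail.const_mul _) hS fun ω ↦ sq_mul_gaussianTail_le (S ω) ht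
  · calc _ ≤ (1 - ∫ ω, gaussianTail (S ω) t ∂P) * t ^ 2 := by
          gcongr
          exact min_le_right _ _
      _ = ∫ ω, t ^ 2 * (1 - gaussianTail (S ω) t) ∂P := by
          rw [integral_const_mul, integral_sub (integrable_const _) htail]
          simp [mul_comm]
      _ ≤ ∫ ω, (S ω : ℝ) ∂P :=
          integral_mono (((integrable_const _).sub htail).const_mul _) hS
            fun ω ↦ sq_mul_one_sub_gaussianTail_le (S ω) ht

end VarianceMixture

section GaussianVector

variable {ι : Type*} [Fintype ι]

lemma map_sum_pi_gaussianReal (m : ι → ℝ) (v : ι → ℝ≥0) :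
    (Measure.pi fun i ↦ gaussianReal (m i) (v i)).map (fun x ↦ ∑ i, x i)
      = gaussianReal (∑ i, m i) (∑ i, v i) := by
  have : IsProbabilityMeasure
      ((Measure.pi fun i ↦ gaussianReal (m i) (v i)).map (fun x ↦ ∑ i, x i)) :=
    Measure.isProbabilityMeasure_map (by fun_prop)
  refine Measure.ext_of_charFun ?_
  rw [charFun_map_sum_pi_eq_prod]
  ext s
  simp [Finset.prod_apply, charFun_gaussianReal, ← Complex.exp_sum, Finset.sum_mul, Finset.mul_sum,
    Finset.sum_div]

/-- The variance of `∑ i, x i * Y i`, where the `Y i` are independent centered Gaussians with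
variances `a i`: the conditional variance of `⟨X, Y⟩` given `X = x`. -/
def innerVar (a : ι → ℝ≥0) (x : ι → ℝ) : ℝ≥0 := ∑ i, a i * ‖x i‖₊ ^ 2

lemma coe_innerVar (a : ι → ℝ≥0) (x : ι → ℝ) : (innerVar a x : ℝ) = ∑ i, (a i : ℝ) * x i ^ 2 := by
  simp [innerVar]

lemma map_sum_mul_pi_gaussianReal (a : ι → ℝ≥0) (x : ι → ℝ) :
    (Measure.pi fun i ↦ gaussianReal 0 (a i)).map (fun y ↦ ∑ i, x i * y i)
      = gaussianReal 0 (innerVar a x) := by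
  have hmul : (Measure.pi fun i ↦ gaussianReal 0 (a i)).map (fun y i ↦ x i * y i)
      = Measure.pi fun i ↦ gaussianReal 0 (a i * ‖x i‖₊ ^ 2) := by
    rw [Measure.pi_map_pi (f := fun i y ↦ x i * y) fun i ↦ by fun_prop]
    refine congrArg Measure.pi (funext fun i ↦ ?_)
    have hsq : NNReal.mk (x i ^ 2) (sq_nonneg _) = ‖x i‖₊ ^ 2 := by
      ext
      simp
    rw [gaussianReal_map_const_mul, mul_zero, hsq, mul_comm]
  calc _ = ((Measure.pi fun i ↦ gaussianReal 0 (a i)).map (fun y i ↦ x i * y i)).map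
        (fun z ↦ ∑ i, z i) := (Measure.map_map (by fun_prop) (by fun_prop)).symm
    _ = gaussianReal 0 (innerVar a x) := by
        rw [hmul, map_sum_pi_gaussianReal, Finset.sum_const_zero, innerVar]

lemma prod_pi_gaussianReal_real_le_sum_mul (μ : Measure (ι → ℝ)) (a : ι → ℝ≥0) (t : ℝ) :
    (μ.prod (Measure.pi fun i ↦ gaussianReal 0 (a i))).real {z | t ≤ ∑ i, z.1 i * z.2 i}
      = ∫ x, gaussianTail (innerVar a x) t ∂μ := by
  have hmeas : MeasurableSet {z : (ι → ℝ) × (ι → ℝ) | t ≤ ∑ i, z.1 i * z.2 i} :=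
    measurableSet_le (by fun_prop) (by fun_prop)
  have hslice (x : ι → ℝ) : (Measure.pi fun i ↦ gaussianReal 0 (a i)).real
      (Prod.mk x ⁻¹' {z | t ≤ ∑ i, z.1 i * z.2 i}) = gaussianTail (innerVar a x) t := by
    rw [gaussianTail, ← map_sum_mul_pi_gaussianReal,
      map_measureReal_apply (by fun_prop) measurableSet_Ici]
    rfl
  simp only [← hslice, Measure.real]
  rw [Measure.prod_apply hmeas, integral_toReal (measurable_measure_prodMk_left hmeas).aemeasurable
    (ae_of_all _ fun x ↦ measure_lt_top _ _)]

lemma memLp_two_sq_gaussianReal (μ : ℝ) (v : ℝ≥0) :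
    MemLp (fun x : ℝ ↦ x ^ 2) 2 (gaussianReal μ v) := by
  rw [memLp_two_iff_integrable_sq (by fun_prop)]
  simpa [← pow_mul, Even.pow_abs (n := 4) (by decide)] using
    (memLp_id_gaussianReal (μ := μ) (v := v) 4).integrable_norm_pow (p := 4) (by norm_num)

lemma variance_sq_gaussianReal (v : ℝ≥0) :
    Var[fun x : ℝ ↦ x ^ 2; gaussianReal 0 v] = 2 * (v : ℝ) ^ 2 := by
  rw [variance_eq_sub (memLp_two_sq_gaussianReal 0 v), integral_sq_gaussianReal]
  simp only [Pi.pow_apply, ← pow_mul, Nat.reduceMul, integral_pow_four_gaussianReal]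
  ring

variable (a : ι → ℝ≥0)

lemma memLp_innerVar :
    MemLp (fun x ↦ (innerVar a x : ℝ)) 2 (Measure.pi fun i ↦ gaussianReal 0 (a i)) := by
  simp only [coe_innerVar]
  exact memLp_finsetSum _ fun i _ ↦ ((memLp_two_sq_gaussianReal 0 (a i)).comp_measurePreserving
    (measurePreserving_eval (fun i ↦ gaussianReal 0 (a i)) i)).const_mul _

lemma integral_innerVar :
    ∫ x, (innerVar a x : ℝ) ∂(Measure.pi fun i ↦ gaussianReal 0 (a i)) = ∑ i, (a i : ℝ) ^ 2 := by
  simp only [coe_innerVar]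
  rw [integral_finsetSum]
  · refine Finset.sum_congr rfl fun i _ ↦ ?_
    rw [integral_const_mul, integral_comp_eval (μ := fun i ↦ gaussianReal 0 (a i))
      (f := fun y ↦ y ^ 2) (by fun_prop), integral_sq_gaussianReal, sq]
  · exact fun i _ ↦ (((memLp_two_sq_gaussianReal 0 (a i)).comp_measurePreserving
      (measurePreserving_eval (fun i ↦ gaussianReal 0 (a i)) i)).integrable one_le_two).const_mul _

lemma variance_innerVar :
    Var[fun x ↦ (innerVar a x : ℝ); Measure.pi fun i ↦ gaussianReal 0 (a i)]
      = 2 * ∑ i, (a i : ℝ) ^ 4 := by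
  have h := variance_sum_pi (μ := fun i ↦ gaussianReal 0 (a i)) (X := fun i y ↦ (a i : ℝ) * y ^ 2)
    fun i ↦ (memLp_two_sq_gaussianReal 0 (a i)).const_mul _
  simp only [variance_const_mul, variance_sq_gaussianReal] at h
  calc _ = Var[∑ i, fun x : ι → ℝ ↦ (a i : ℝ) * x i ^ 2;
        Measure.pi fun i ↦ gaussianReal 0 (a i)] := by
        congr with x
        simp [coe_innerVar]
    _ = 2 * ∑ i, (a i : ℝ) ^ 4 := by
        rw [h, Finset.mul_sum]
        exact Finset.sum_congr rfl fun i _ ↦ by ring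

end GaussianVector

section Nrm

variable {d q : ℕ} {α : Fin d → ℝ}

lemma nrm_nonneg (q : ℕ) (hα : ∀ i, 0 ≤ α i) : 0 ≤ nrm q α :=
  Real.rpow_nonneg (Finset.sum_nonneg fun i _ ↦ pow_nonneg (hα i) q) _

lemma nrm_pow (hq : q ≠ 0) (hα : ∀ i, 0 ≤ α i) : nrm q α ^ q = ∑ i, α i ^ q := by
  rw [nrm, one_div,
    Real.rpow_inv_natCast_pow (Finset.sum_nonneg fun i _ ↦ pow_nonneg (hα i) q) hq]

lemma norm_le_nrm (hq : q ≠ 0) (hα : ∀ i, 0 ≤ α i) : ‖α‖ ≤ nrm q α := by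
  refine (pi_norm_le_iff_of_nonneg (nrm_nonneg q hα)).2 fun i ↦ ?_
  rw [Real.norm_of_nonneg (hα i), ← pow_le_pow_iff_left₀ (hα i) (nrm_nonneg q hα) hq,
    nrm_pow hq hα]
  exact Finset.single_le_sum (f := fun i ↦ α i ^ q) (fun i _ ↦ pow_nonneg (hα i) q)
    (Finset.mem_univ i)

lemma nrm_pos (hq : q ≠ 0) (hα : ∀ i, 0 ≤ α i) (h : α ≠ 0) : 0 < nrm q α :=
  (norm_pos_iff.2 h).trans_le (norm_le_nrm hq hα)

lemma nrm_succ_pow_le (hq : q ≠ 0) (hα : ∀ i, 0 ≤ α i) :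
    nrm (q + 1) α ^ (q + 1) ≤ ‖α‖ * nrm q α ^ q := by
  rw [nrm_pow q.succ_ne_zero hα, nrm_pow hq hα, Finset.mul_sum]
  gcongr with i
  rw [pow_succ']
  gcongr
  · exact pow_nonneg (hα i) q
  · exact (le_abs_self _).trans (norm_le_pi_norm α i)

end Nrm

namespace IsThreshold

variable {d : ℕ} {α : Fin d → ℝ} {p t : ℝ}

lemma eq_integral (hp : 0 ≤ p) (h : IsThreshold d α p t) :
    p = ∫ x, gaussianTail (innerVar (fun i ↦ (α i).toNNReal) x) t ∂gaussPi d α := by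
  have hreal : ((gaussPi d α).prod (gaussPi d α)).real {z | t ≤ dotp z.1 z.2} = p := by
    rw [Measure.real, h, ENNReal.toReal_ofReal hp]
  rw [← hreal]
  exact prod_pi_gaussianReal_real_le_sum_mul (gaussPi d α) _ t

lemma ne_zero (hp : p ∈ Set.Ioo 0 1) (h : IsThreshold d α p t) : α ≠ 0 := by
  rintro rfl
  have hzero : p = if t ≤ 0 then 1 else 0 := by
    simpa [gaussPi, innerVar, gaussianTail_zero_left] using h.eq_integral hp.1.le
  split_ifs at hzero
  · exact hp.2.ne hzero
  · exact hp.1.ne' hzero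

lemma abs_sub_gaussianTail_le (hp : p ∈ Set.Ioo 0 1) (hα : ∀ i, 0 ≤ α i)
    (h : IsThreshold d α p t) :
    |p - gaussianTail 1 (t / nrm 2 α)| ≤ 3 * (nrm 4 α / nrm 2 α) ^ 4 := by
  have hN : 0 < nrm 2 α := nrm_pos two_ne_zero hα (h.ne_zero hp)
  set a : Fin d → ℝ≥0 := fun i ↦ (α i).toNNReal
  have ha (i : Fin d) : (a i : ℝ) = α i := Real.coe_toNNReal _ (hα i)
  have hv : ((∑ i, a i ^ 2 : ℝ≥0) : ℝ) = nrm 2 α ^ 2 := by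
    simp [nrm_pow two_ne_zero hα, ha]
  have hv0 : ∑ i, a i ^ 2 ≠ 0 := by
    rw [← NNReal.coe_ne_zero, hv]
    positivity
  calc |p - gaussianTail 1 (t / nrm 2 α)|
      = |∫ x, gaussianTail (innerVar a x) t ∂gaussPi d α - gaussianTail (∑ i, a i ^ 2) t| := by
        rw [gaussianTail_eq_gaussianTail_one hv0, hv, Real.sqrt_sq hN.le,
          ← h.eq_integral hp.1.le]
    _ ≤ 3 / (2 * (nrm 2 α ^ 2) ^ 2) * (2 * nrm 4 α ^ 4) := by
        have hmix := abs_integral_gaussianTail_sub_le (memLp_innerVar a) hv0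
          (by simp [integral_innerVar]) t
        simp only [variance_innerVar, hv, ha, ← nrm_pow four_ne_zero hα] at hmix
        exact hmix
    _ = 3 * (nrm 4 α / nrm 2 α) ^ 4 := by
        field_simp

lemma min_mul_sq_le (hp : 0 ≤ p) (hα : ∀ i, 0 ≤ α i) (h : IsThreshold d α p t) :
    min p (1 - p) * t ^ 2 ≤ nrm 2 α ^ 2 := by
  have hcheb := min_integral_gaussianTail_mul_sq_le
    ((memLp_innerVar fun i ↦ (α i).toNNReal).integrable one_le_two) t
  simp only [integral_innerVar, Real.coe_toNNReal _ (hα _), ← nrm_pow two_ne_zero hα] at hcheb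
  rw [h.eq_integral hp]
  exact hcheb

lemma abs_div_nrm_le (hp : p ∈ Set.Ioo 0 1) (hα : ∀ i, 0 ≤ α i) (h : IsThreshold d α p t) :
    |t / nrm 2 α| ≤ √(1 / min p (1 - p)) := by
  have hN : 0 < nrm 2 α := nrm_pos two_ne_zero hα (h.ne_zero hp)
  have hmin : 0 < min p (1 - p) := lt_min hp.1 (sub_pos.2 hp.2)
  refine Real.abs_le_sqrt ?_
  rw [div_pow, div_le_div_iff₀ (by positivity) hmin, one_mul, mul_comm]
  exact h.min_mul_sq_le hp.1.le hα

lemma abs_sub_gaussianTail_le_nrm_three (hp : p ∈ Set.Ioo 0 1) (hα : ∀ i, 0 ≤ α i)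
    (h : IsThreshold d α p t) :
    |p - gaussianTail 1 (t / nrm 2 α)| ≤ 3 * (nrm 3 α / nrm 2 α) ^ 3 := by
  have hN : 0 < nrm 2 α := nrm_pos two_ne_zero hα (h.ne_zero hp)
  have hpow : nrm 4 α ^ 4 ≤ nrm 2 α * nrm 3 α ^ 3 :=
    (nrm_succ_pow_le three_ne_zero hα).trans <| mul_le_mul_of_nonneg_right
      (norm_le_nrm two_ne_zero hα) (pow_nonneg (nrm_nonneg 3 hα) 3)
  calc _ ≤ 3 * (nrm 4 α / nrm 2 α) ^ 4 := h.abs_sub_gaussianTail_le hp hα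
    _ ≤ 3 * (nrm 2 α * nrm 3 α ^ 3 / nrm 2 α ^ 4) := by
        rw [div_pow]
        gcongr
    _ = 3 * (nrm 3 α / nrm 2 α) ^ 3 := by field_simp

lemma nrm_two_mul_abs_sub_gaussianTail_le (hp : p ∈ Set.Ioo 0 1) (hα : ∀ i, 0 ≤ α i)
    (h : IsThreshold d α p t) :
    nrm 2 α * |p - gaussianTail 1 (t / nrm 2 α)| ≤ 3 * ‖α‖ := by
  have hN : 0 < nrm 2 α := nrm_pos two_ne_zero hα (h.ne_zero hp)
  have hcube : nrm 3 α ^ 3 ≤ ‖α‖ * nrm 2 α ^ 2 := nrm_succ_pow_le two_ne_zero hα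
  calc _ ≤ nrm 2 α * (3 * (nrm 3 α / nrm 2 α) ^ 3) := by
        gcongr
        exact h.abs_sub_gaussianTail_le_nrm_three hp hα
    _ ≤ nrm 2 α * (3 * (‖α‖ * nrm 2 α ^ 2 / nrm 2 α ^ 3)) := by
        rw [div_pow]
        gcongr
    _ = 3 * ‖α‖ := by field_simp

lemma abs_sub_nrm_mul_le {tp M : ℝ} (hp : p ∈ Set.Ioo 0 1) (hα : ∀ i, 0 ≤ α i)
    (h : IsThreshold d α p t) (htp : gaussianTail 1 tp = p) (htpM : |tp| ≤ M)
    (hM : √(1 / min p (1 - p)) ≤ M) :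
    |t - nrm 2 α * tp| ≤ 3 / gaussianPDFReal 0 1 M * ‖α‖ := by
  have hN : 0 < nrm 2 α := nrm_pos two_ne_zero hα (h.ne_zero hp)
  have hpdf : 0 < gaussianPDFReal 0 1 M := gaussianPDFReal_pos 0 1 M one_ne_zero
  have hdist : |t - nrm 2 α * tp| = nrm 2 α * |tp - t / nrm 2 α| := by
    rw [abs_sub_comm tp, ← abs_of_pos hN, ← abs_mul, abs_of_pos hN]
    congr 1
    field_simp
  rw [div_mul_eq_mul_div, le_div_iff₀' hpdf]
  calc gaussianPDFReal 0 1 M * |t - nrm 2 α * tp|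
      = nrm 2 α * (gaussianPDFReal 0 1 M * |tp - t / nrm 2 α|) := by
        rw [hdist]
        ring
    _ ≤ nrm 2 α * |p - gaussianTail 1 (t / nrm 2 α)| := by
        rw [← htp]
        gcongr
        exact gaussianPDFReal_mul_abs_sub_le_abs_gaussianTail_sub one_ne_zero htpM
          ((h.abs_div_nrm_le hp hα).trans hM)
    _ ≤ 3 * ‖α‖ := h.nrm_two_mul_abs_sub_gaussianTail_le hp hα

end IsThreshold

theorem threshold_bounds_general (p : ℝ) (hp : p ∈ Set.Ioo (0 : ℝ) 1)
    (tp : ℝ) (htp : (gaussianReal 0 1) (Set.Ici tp) = ENNReal.ofReal p) :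
    ∃ k > (0 : ℝ), ∀ (d : ℕ) (α : Fin d → ℝ), (∀ i, 0 ≤ α i) →
      ∀ t : ℝ, IsThreshold d α p t →
        |t - nrm 2 α * tp| ≤ k * ‖α‖ ∧
        |p - ((gaussianReal 0 1) (Set.Ioi (t / nrm 2 α))).toReal|
          ≤ 3 * (nrm 3 α / nrm 2 α) ^ 3 := by
  have htail : gaussianTail 1 tp = p := by
    rw [gaussianTail, Measure.real, htp, ENNReal.toReal_ofReal hp.1.le]
  refine ⟨3 / gaussianPDFReal 0 1 (max |tp| √(1 / min p (1 - p))),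
    div_pos three_pos (gaussianPDFReal_pos 0 1 _ one_ne_zero), fun d α hα t ht ↦ ⟨?_, ?_⟩⟩
  · exact ht.abs_sub_nrm_mul_le hp hα htail (le_max_left _ _) (le_max_right _ _)
  · rw [← measureReal_def, gaussianReal_real_Ioi one_ne_zero]
    exact ht.abs_sub_gaussianTail_le_nrm_three hp hα

/-- Lemma 4. With `t_p` the upper-`p` quantile of the standard Gaussian,
there is a constant `k_p > 0` depending only on `p` such that
`‖α‖₂ t_p - k_p ≤ t_{p,α} ≤ ‖α‖₂ t_p + k_p`; moreover, with
`p' = ℙ(Z > t_{p,α}/‖α‖₂)`, one has `|p - p'| ≤ 3 (‖α‖₃/‖α‖₂)³`. -/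
theorem threshold_bounds (p : ℝ) (hp : p ∈ Set.Ioo (0 : ℝ) 1)
    (tp : ℝ) (htp : (gaussianReal 0 1) (Set.Ici tp) = ENNReal.ofReal p) :
    ∃ k > (0 : ℝ), ∀ (d : ℕ) (α : Fin d → ℝ),
      (∀ i, α i ∈ Set.Icc (0 : ℝ) 1) → (∃ i, α i = 1) →
      ∀ t : ℝ, IsThreshold d α p t →
        (nrm 2 α * tp - k ≤ t ∧ t ≤ nrm 2 α * tp + k) ∧
        |p - ((gaussianReal 0 1) (Set.Ioi (t / nrm 2 α))).toReal|
          ≤ 3 * (nrm 3 α / nrm 2 α) ^ 3 := by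
  obtain ⟨k, hk, hbounds⟩ := threshold_bounds_general p hp tp htp
  refine ⟨k, hk, fun d α hα _ t ht ↦ ?_⟩
  obtain ⟨hquantile, htail⟩ := hbounds d α (fun i ↦ (hα i).1) t ht
  have hnorm : ‖α‖ ≤ 1 := (pi_norm_le_iff_of_nonneg zero_le_one).2 fun i ↦
    abs_le.2 ⟨by linarith [(hα i).1], (hα i).2⟩
  have habs := abs_le.1 (hquantile.trans (mul_le_of_le_one_right hk.le hnorm))
  exact ⟨⟨by linarith, by linarith⟩, htail⟩

end
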